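/- arXiv:1506.07560 — 3 statements merged into one kernel-verified Lean document; each statement's English description precedes it below -/
import Mathlib

section
/- If τ ≥ 1/3, then the capillary Whitham symbol m is strictly increasing on [0, ∞) and m(z) → ∞ as z → ∞; consequently m(Nk) > m(k) for every k > 0 and every integer N ≥ 2. -/
open Real Filter

/-- The capillary Whitham symbol `m(z) = √(gd(1 + τ z²) tanh z / z)`, `m(0) = √(gd)`,
with `τ = T/(g d²)`. -/
noncomputable def mW (g d T : ℝ) (z : ℝ) : ℝ :=
  if z = 0 then Real.sqrt (g * d)
  else Real.sqrt (g * d * (1 + T / (g * d ^ 2) * z ^ 2) * Real.tanh z / z)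

/-!
In units where `gd = 1` the squared symbol is `(1 + τ z²) tanh z / z`, which differs from its value
at another `σ` only by `(τ - σ) z tanh z`. This difference is monotone on `[0, ∞)` when `σ ≤ τ`, so
monotonicity only has to be proved at the critical value `σ = 1/3`, and the growth at infinity is
that of `τ z tanh z`. At `σ = 1/3` the sign of the derivative at `z` is, with `w = 2z`, the sign of
`w (12 + w²) - (12 - w²) sinh w`, a function that vanishes at `0` together with its first three
derivatives and whose fourth derivative is positive on `(0, ∞)`.
-/

open Set

lemma pos_of_hasDerivAt_pos {f f' : ℝ → ℝ} {a : ℝ} (ha : 0 ≤ f a)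
    (hcont : ContinuousOn f (Ici a)) (hf : ∀ x > a, HasDerivAt f (f' x) x)
    (hf' : ∀ x > a, 0 < f' x) : ∀ x > a, 0 < f x := by
  have hmono : StrictMonoOn f (Ici a) := by
    refine strictMonoOn_of_hasDerivWithinAt_pos (convex_Ici a) (f' := f') hcont ?_ ?_ <;>
      rw [interior_Ici]
    · exact fun x hx ↦ (hf x hx).hasDerivWithinAt
    · exact hf'
  exact fun x hx ↦ ha.trans_lt (hmono self_mem_Ici (le_of_lt hx) hx)

lemma twelve_sub_sq_mul_sinh_lt {w : ℝ} (hw : 0 < w) :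
    (12 - w ^ 2) * sinh w < w * (12 + w ^ 2) := by
  have hsq (x : ℝ) : HasDerivAt (fun y ↦ y ^ 2) (2 * x) x := by simpa using hasDerivAt_pow 2 x
  have third_deriv_pos : ∀ x > 0, 0 < (x ^ 2 - 6) * cosh x + 6 * x * sinh x + 6 :=
    pos_of_hasDerivAt_pos (f' := fun x ↦ x ^ 2 * sinh x + 8 * x * cosh x)
      (by norm_num) (by fun_prop)
      (fun x _ ↦ ((((hsq x).sub_const 6).mul (hasDerivAt_cosh x)).add
        (((hasDerivAt_id x).const_mul 6).mul (hasDerivAt_sinh x))).add_const 6 |>.congr_deriv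
          (by simp only [id]; ring))
      (fun x hx ↦ by positivity)
  have second_deriv_pos : ∀ x > 0, 0 < (x ^ 2 - 10) * sinh x + 4 * x * cosh x + 6 * x :=
    pos_of_hasDerivAt_pos (by norm_num) (by fun_prop)
      (fun x _ ↦ ((((hsq x).sub_const 10).mul (hasDerivAt_sinh x)).add
        (((hasDerivAt_id x).const_mul 4).mul (hasDerivAt_cosh x))).add
          ((hasDerivAt_id x).const_mul 6) |>.congr_deriv (by simp only [id]; ring))
      third_deriv_pos
  have first_deriv_pos : ∀ x > 0, 0 < (x ^ 2 - 12) * cosh x + 2 * x * sinh x + 3 * x ^ 2 + 12 :=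
    pos_of_hasDerivAt_pos (by norm_num) (by fun_prop)
      (fun x _ ↦ (((((hsq x).sub_const 12).mul (hasDerivAt_cosh x)).add
        (((hasDerivAt_id x).const_mul 2).mul (hasDerivAt_sinh x))).add
          ((hsq x).const_mul 3)).add_const 12 |>.congr_deriv (by simp only [id]; ring))
      second_deriv_pos
  have diff_pos : ∀ x > 0, 0 < (x ^ 2 - 12) * sinh x + x * (x ^ 2 + 12) :=
    pos_of_hasDerivAt_pos (by norm_num) (by fun_prop)
      (fun x _ ↦ (((hsq x).sub_const 12).mul (hasDerivAt_sinh x)).add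
        ((hasDerivAt_id x).mul ((hsq x).add_const 12)) |>.congr_deriv
          (by simp only [id]; ring))
      first_deriv_pos
  linear_combination diff_pos w hw

lemma dslope_nonneg_of_monotone {𝕜 : Type*} [NontriviallyNormedField 𝕜] [LinearOrder 𝕜]
    [IsStrictOrderedRing 𝕜] [OrderTopology 𝕜] {f : 𝕜 → 𝕜} (hf : Monotone f) (a b : 𝕜) :
    0 ≤ dslope f a b := by
  rcases eq_or_ne b a with rfl | hab
  · rw [dslope_same]
    exact hf.deriv_nonneg
  · rw [dslope_of_ne f hab]
    exact (hf.monotoneOn univ).slope_nonneg trivial trivial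

lemma hasDerivAt_tanh (x : ℝ) : HasDerivAt tanh (1 / cosh x ^ 2) x := by
  have h := (hasDerivAt_sinh x).div (hasDerivAt_cosh x) (cosh_pos x).ne'
  rw [show sinh / cosh = tanh from funext fun y ↦ (tanh_eq_sinh_div_cosh y).symm] at h
  refine h.congr_deriv ?_
  congr 1
  linear_combination cosh_sq x

lemma tanh_strictMono : StrictMono tanh :=
  strictMono_of_hasDerivAt_pos hasDerivAt_tanh fun x ↦ by positivity

lemma tanh_nonneg {x : ℝ} (hx : 0 ≤ x) : 0 ≤ tanh x :=
  tanh_zero ▸ tanh_strictMono.monotone hx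

lemma monotoneOn_mul_tanh : MonotoneOn (fun z ↦ z * tanh z) (Ici 0) :=
  monotoneOn_id.mul (tanh_strictMono.monotone.monotoneOn _) (fun _ hz ↦ hz)
    fun _ hz ↦ tanh_nonneg hz

lemma tendsto_mul_tanh_atTop : Tendsto (fun z ↦ z * tanh z) atTop atTop := by
  have tanh_one_pos : 0 < tanh 1 := tanh_zero ▸ tanh_strictMono one_pos
  refine tendsto_atTop_mono' atTop ?_ (tendsto_id.atTop_mul_const tanh_one_pos)
  filter_upwards [eventually_ge_atTop 1] with z hz
  exact mul_le_mul_of_nonneg_left (tanh_strictMono.monotone hz) (zero_le_one.trans hz)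

/-- The square of the capillary Whitham symbol in units where `gd = 1`. The slope
`dslope tanh 0` encodes `tanh z / z` together with its continuous extension to `z = 0`. -/
noncomputable def whithamSymbolSq (τ z : ℝ) : ℝ := (1 + τ * z ^ 2) * dslope tanh 0 z

lemma dslope_tanh_zero_of_ne {z : ℝ} (hz : z ≠ 0) : dslope tanh 0 z = tanh z / z := by
  rw [dslope_of_ne _ hz, slope_def_field, tanh_zero, sub_zero, sub_zero]

lemma mW_eq_sqrt (g d T z : ℝ) :
    mW g d T z = √(g * d * whithamSymbolSq (T / (g * d ^ 2)) z) := by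
  rcases eq_or_ne z 0 with rfl | hz
  · simp [mW, whithamSymbolSq, (hasDerivAt_tanh 0).deriv]
  · rw [mW, if_neg hz, whithamSymbolSq, dslope_tanh_zero_of_ne hz, ← mul_assoc, mul_div_assoc]

lemma whithamSymbolSq_nonneg {τ : ℝ} (hτ : 0 ≤ τ) (z : ℝ) : 0 ≤ whithamSymbolSq τ z :=
  mul_nonneg (by positivity) (dslope_nonneg_of_monotone tanh_strictMono.monotone 0 z)

lemma continuous_whithamSymbolSq (τ : ℝ) : Continuous (whithamSymbolSq τ) := by
  have tanh_differentiable : Differentiable ℝ tanh := fun x ↦ (hasDerivAt_tanh x).differentiableAt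
  have dslope_continuous : Continuous (dslope tanh 0) := by
    rw [← continuousOn_univ, continuousOn_dslope univ_mem]
    exact ⟨tanh_differentiable.continuous.continuousOn, tanh_differentiable 0⟩
  unfold whithamSymbolSq
  fun_prop

lemma whithamSymbolSq_eq_add (σ τ z : ℝ) :
    whithamSymbolSq τ z = whithamSymbolSq σ z + (τ - σ) * (z * tanh z) := by
  have hslope : z * dslope tanh 0 z = tanh z := by
    simpa using sub_smul_dslope tanh 0 z
  rw [whithamSymbolSq, whithamSymbolSq, ← hslope]
  ring

lemma hasDerivAt_whithamSymbolSq (τ : ℝ) {z : ℝ} (hz : z ≠ 0) :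
    HasDerivAt (whithamSymbolSq τ)
      (((τ * z ^ 2 - 1) * (sinh z * cosh z) + z * (1 + τ * z ^ 2)) / (z * cosh z) ^ 2) z := by
  have hquot : (fun y ↦ (1 + τ * y ^ 2) * (tanh y / y)) =ᶠ[nhds z] whithamSymbolSq τ := by
    filter_upwards [eventually_ne_nhds hz] with y hy
    rw [whithamSymbolSq, dslope_tanh_zero_of_ne hy]
  refine HasDerivAt.congr_of_eventuallyEq ?_ hquot.symm
  refine ((((hasDerivAt_pow 2 z).const_mul τ).const_add 1).mul
    ((hasDerivAt_tanh z).div (hasDerivAt_id z) hz)).congr_deriv ?_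
  have cosh_ne_zero := (cosh_pos z).ne'
  simp only [tanh_eq_sinh_div_cosh, id, Pi.div_apply]
  field_simp
  ring

lemma strictMonoOn_whithamSymbolSq_one_third :
    StrictMonoOn (whithamSymbolSq (1 / 3)) (Ici 0) := by
  refine strictMonoOn_of_deriv_pos (convex_Ici 0) (continuous_whithamSymbolSq _).continuousOn ?_
  rw [interior_Ici]
  intro z (hz : 0 < z)
  have numerator_pos :
      0 < (1 / 3 * z ^ 2 - 1) * (sinh z * cosh z) + z * (1 + 1 / 3 * z ^ 2) := by
    have hsinh := twelve_sub_sq_mul_sinh_lt (mul_pos two_pos hz)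
    rw [sinh_two_mul] at hsinh
    linear_combination hsinh / 24
  rw [(hasDerivAt_whithamSymbolSq _ hz.ne').deriv]
  positivity

lemma strictMonoOn_whithamSymbolSq {τ : ℝ} (hτ : 1 / 3 ≤ τ) :
    StrictMonoOn (whithamSymbolSq τ) (Ici 0) := by
  rw [funext (whithamSymbolSq_eq_add (1 / 3) τ)]
  exact strictMonoOn_whithamSymbolSq_one_third.add_monotone fun _ hx _ hy hxy ↦
    mul_le_mul_of_nonneg_left (monotoneOn_mul_tanh hx hy hxy) (sub_nonneg.2 hτ)

lemma tendsto_whithamSymbolSq_atTop {τ : ℝ} (hτ : 0 < τ) :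
    Tendsto (whithamSymbolSq τ) atTop atTop := by
  rw [funext (whithamSymbolSq_eq_add 0 τ), sub_zero]
  exact tendsto_atTop_mono (fun z ↦ le_add_of_nonneg_left (whithamSymbolSq_nonneg le_rfl z))
    (tendsto_mul_tanh_atTop.const_mul_atTop hτ)

/-- if `τ ≥ 1/3` then `m` is strictly increasing on `[0,∞)` and tends to `∞`;
consequently `m(Nk) > m(k)` for `k > 0` and integers `N ≥ 2`. -/
theorem whitham_symbol_strictMono_of_large_surface_tension (g d T : ℝ)
    (hg : 0 < g) (hd : 0 < d) (hT : 0 ≤ T) (hτ : 1 / 3 ≤ T / (g * d ^ 2)) :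
    StrictMonoOn (mW g d T) (Set.Ici 0) ∧
    Tendsto (mW g d T) atTop atTop ∧
    ∀ k : ℝ, 0 < k → ∀ N : ℕ, 2 ≤ N → mW g d T k < mW g d T (N * k) := by
  have hgd : 0 < g * d := mul_pos hg hd
  have hτ_pos : 0 < T / (g * d ^ 2) := lt_of_lt_of_le (by norm_num) hτ
  have hmono : StrictMonoOn (mW g d T) (Ici 0) := by
    intro x hx y hy hxy
    rw [mW_eq_sqrt, mW_eq_sqrt]
    exact sqrt_lt_sqrt (mul_nonneg hgd.le (whithamSymbolSq_nonneg hτ_pos.le x))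
      (mul_lt_mul_of_pos_left (strictMonoOn_whithamSymbolSq hτ hx hy hxy) hgd)
  refine ⟨hmono, ?_, fun k hk N hN ↦ hmono hk.le (mul_nonneg N.cast_nonneg hk.le) ?_⟩
  · rw [funext (mW_eq_sqrt g d T)]
    exact tendsto_sqrt_atTop.comp
      ((tendsto_whithamSymbolSq_atTop hτ_pos).const_mul_atTop hgd)
  · exact lt_mul_of_one_lt_left hk (Nat.one_lt_cast.2 hN)
end

section
/- Let g, d, T > 0 and k > 0. The second-harmonic (Wilton ripple) resonance condition m(k) = m(2k) holds if and only if τ·k² = tanh²(k)/(3 − tanh²(k)). -/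
open Real Filter

/-!
Writing `m(z)² = gd (1 + τ z²) tanhc z` with `tanhc z = tanh z / z > 0`, the double-angle formula
`tanhc (2k) = tanhc k / (1 + tanh² k)` cancels every factor of `tanhc k` from `m(k)² = m(2k)²`. What
remains, `(1 + τ k²)(1 + tanh² k) = 1 + 4 τ k²`, is linear in `τ k²`, and its coefficient
`3 - tanh² k` does not vanish because `tanh² k < 1`.
-/

lemma tanh_two_mul (x : ℝ) : tanh (2 * x) = 2 * tanh x / (1 + tanh x ^ 2) := by
  have hcosh : cosh x ≠ 0 := (cosh_pos x).ne'
  simp only [tanh_eq_sinh_div_cosh, sinh_two_mul, cosh_two_mul]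
  field_simp

/-- The function `tanh x / x`, extended continuously by `1` at `x = 0`; the hyperbolic analogue of
`Real.sinc`. It turns the two cases in the definition of `mW` into a single formula. -/
noncomputable def tanhc (x : ℝ) : ℝ := if x = 0 then 1 else tanh x / x

lemma tanhc_zero : tanhc 0 = 1 := if_pos rfl

lemma tanhc_of_ne_zero {x : ℝ} (hx : x ≠ 0) : tanhc x = tanh x / x := if_neg hx

lemma tanhc_neg (x : ℝ) : tanhc (-x) = tanhc x := by
  simp only [tanhc, neg_eq_zero, tanh_neg, neg_div_neg_eq]

lemma tanhc_pos (x : ℝ) : 0 < tanhc x := by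
  have of_pos {y : ℝ} (hy : 0 < y) : 0 < tanhc y := by
    rw [tanhc_of_ne_zero hy.ne', tanh_eq_sinh_div_cosh]
    exact div_pos (div_pos (sinh_pos_iff.mpr hy) (cosh_pos y)) hy
  rcases lt_trichotomy x 0 with hx | rfl | hx
  · exact tanhc_neg x ▸ of_pos (neg_pos.mpr hx)
  · exact tanhc_zero ▸ one_pos
  · exact of_pos hx

lemma tanhc_two_mul (x : ℝ) : tanhc (2 * x) = tanhc x / (1 + tanh x ^ 2) := by
  rcases eq_or_ne x 0 with rfl | hx
  · simp only [mul_zero, tanhc_zero, tanh_zero, zero_pow two_ne_zero, add_zero, div_one]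
  · rw [tanhc_of_ne_zero hx, tanhc_of_ne_zero (mul_ne_zero two_ne_zero hx), tanh_two_mul]
    field_simp

lemma mW_eq_sqrt_tanhc (g d T z : ℝ) :
    mW g d T z = √(g * d * ((1 + T / (g * d ^ 2) * z ^ 2) * tanhc z)) := by
  rcases eq_or_ne z 0 with rfl | hz
  · simp only [mW, if_true, tanhc_zero, zero_pow two_ne_zero, mul_zero, add_zero, mul_one]
  · rw [mW, if_neg hz, tanhc_of_ne_zero hz, mul_div_assoc, mul_assoc]

lemma mW_eq_mW_iff {g d T : ℝ} (hg : 0 < g) (hd : 0 < d) (hT : 0 ≤ T) (z w : ℝ) :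
    mW g d T z = mW g d T w ↔
      (1 + T / (g * d ^ 2) * z ^ 2) * tanhc z = (1 + T / (g * d ^ 2) * w ^ 2) * tanhc w := by
  have radicand_nonneg (x : ℝ) : 0 ≤ g * d * ((1 + T / (g * d ^ 2) * x ^ 2) * tanhc x) := by
    have := tanhc_pos x
    positivity
  rw [mW_eq_sqrt_tanhc, mW_eq_sqrt_tanhc, sqrt_inj (radicand_nonneg z) (radicand_nonneg w),
    mul_right_inj' (mul_pos hg hd).ne']

theorem wilton_ripple_resonance_condition_general (g d T : ℝ) (hg : 0 < g) (hd : 0 < d)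
    (hT : 0 ≤ T) (k : ℝ) :
    mW g d T k = mW g d T (2 * k) ↔
      T / (g * d ^ 2) * k ^ 2 = tanh k ^ 2 / (3 - tanh k ^ 2) := by
  rw [mW_eq_mW_iff hg hd hT, tanhc_two_mul]
  set τ := T / (g * d ^ 2)
  have three_sub_pos : 0 < 3 - tanh k ^ 2 := by linarith [tanh_sq_lt_one k]
  have one_add_pos : 0 < 1 + tanh k ^ 2 := by positivity
  calc (1 + τ * k ^ 2) * tanhc k = (1 + τ * (2 * k) ^ 2) * (tanhc k / (1 + tanh k ^ 2))
      ↔ 1 + τ * k ^ 2 = (1 + τ * (2 * k) ^ 2) / (1 + tanh k ^ 2) := by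
        rw [mul_div_left_comm, mul_comm, mul_right_inj' (tanhc_pos k).ne']
    _ ↔ (1 + τ * k ^ 2) * (1 + tanh k ^ 2) = 1 + τ * (2 * k) ^ 2 := eq_div_iff one_add_pos.ne'
    _ ↔ τ * k ^ 2 * (3 - tanh k ^ 2) = tanh k ^ 2 := by
        constructor <;> intro h <;> linear_combination -h
    _ ↔ τ * k ^ 2 = tanh k ^ 2 / (3 - tanh k ^ 2) := (eq_div_iff three_sub_pos.ne').symm

/-- the second-harmonic (Wilton ripple) resonance `m(k) = m(2k)` holds
if and only if `τ k² = tanh²(k)/(3 − tanh²(k))`. -/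
theorem wilton_ripple_resonance_condition (g d T : ℝ) (hg : 0 < g) (hd : 0 < d)
    (hT : 0 < T) (k : ℝ) (hk : 0 < k) :
    mW g d T k = mW g d T (2 * k) ↔
      T / (g * d ^ 2) * k ^ 2 = Real.tanh k ^ 2 / (3 - Real.tanh k ^ 2) :=
  wilton_ripple_resonance_condition_general g d T hg hd hT.le k
end

section
/- Let k > 0 and suppose m(kn) ≠ m(k) for every integer n with |n| ≥ 2. If v is a complex-valued, 2π-periodic H¹ function satisfying ∂_z(−M_k + m(k))v = 0 in the Fourier sense, i.e. n·(m(k) − m(kn))·v̂_n = 0 for every n ∈ ℤ, then v̂_n = 0 for all |n| ≥ 2; that is, v(z) = α + β e^{iz} + γ e^{−iz} for some complex constants α, β, γ. In particular, zero is an eigenvalue of the linearization L₀ = ∂_z(−M_k + m(k)) about the zero solution with geometric multiplicity exactly three, with eigenspace spanned by 1, cos(z) and sin(z). -/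
open Real Filter

/-- The `n`-th Fourier coefficient of a complex-valued `2π`-periodic function. -/
noncomputable def fcoefC (f : ℝ → ℂ) (n : ℤ) : ℂ :=
  (1 / (2 * Real.pi)) *
    ∫ z in (-Real.pi)..Real.pi, Complex.exp (-(n : ℂ) * (z : ℂ) * Complex.I) * f z

local instance fact_two_pi_pos : Fact (0 < 2 * π) := ⟨two_pi_pos⟩

theorem eq_sum_fourierCoeff_smul_fourier {p : ℝ} [Fact (0 < p)] {f : C(AddCircle p, ℂ)}
    {s : Finset ℤ} (hs : ∀ n ∉ s, fourierCoeff f n = 0) :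
    f = ∑ n ∈ s, fourierCoeff f n • fourier n := by
  have hsum : HasSum (fun n => fourierCoeff f n • fourier n) f :=
    hasSum_fourier_series_of_summable (summable_of_ne_finset_zero hs)
  exact hsum.unique (hasSum_sum_of_ne_finset_zero fun n hn => by rw [hs n hn, zero_smul])

theorem fourier_coe_two_pi (n : ℤ) (z : ℝ) :
    fourier n (z : AddCircle (2 * π)) = Complex.exp (n * z * Complex.I) := by
  have hπ : (π : ℂ) ≠ 0 := Complex.ofReal_ne_zero.mpr pi_ne_zero
  rw [fourier_coe_apply]
  congr 1
  push_cast
  field_simp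

theorem fcoefC_coe (f : AddCircle (2 * π) → ℂ) (n : ℤ) :
    fcoefC (fun z : ℝ => f z) n = fourierCoeff f n := by
  rw [fourierCoeff_eq_intervalIntegral f n (-π), fcoefC,
    show -π + 2 * π = π by ring, Complex.real_smul]
  simp only [fourier_coe_two_pi, smul_eq_mul]
  push_cast
  rfl

theorem eq_sum_fcoefC_mul_exp {v : ℝ → ℂ} (hv : Continuous v)
    (hper : Function.Periodic v (2 * π)) {s : Finset ℤ} (hs : ∀ n ∉ s, fcoefC v n = 0) (z : ℝ) :
    v z = ∑ n ∈ s, fcoefC v n * Complex.exp (n * z * Complex.I) := by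
  let f : C(AddCircle (2 * π), ℂ) := ⟨hper.lift, hv.quotient_lift _⟩
  have hcoeff (n : ℤ) : fourierCoeff f n = fcoefC v n := (fcoefC_coe f n).symm
  have hf : f = ∑ n ∈ s, fourierCoeff f n • fourier n :=
    eq_sum_fourierCoeff_smul_fourier fun n hn => (hcoeff n).trans (hs n hn)
  calc
    v z = f z := rfl
    _ = ∑ n ∈ s, fourierCoeff f n * fourier n (z : AddCircle (2 * π)) := by
      conv_lhs => rw [hf]
      simp only [ContinuousMap.sum_apply, ContinuousMap.smul_apply, smul_eq_mul]
    _ = ∑ n ∈ s, fcoefC v n * Complex.exp (n * z * Complex.I) := by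
      simp only [hcoeff, fourier_coe_two_pi]

/-- For the Fourier multiplier `M` with symbol `m`, `heq` is the equation `∂_z(−M + c) v = 0` on the
Fourier side, divided by `i`. -/
theorem whitham_linearization_zero_eigenspace_general {m : ℤ → ℂ} {c : ℂ}
    (hm : ∀ n : ℤ, 2 ≤ |n| → m n ≠ c) {v : ℝ → ℂ} (hv : Continuous v)
    (hper : Function.Periodic v (2 * π)) (heq : ∀ n : ℤ, n * (c - m n) * fcoefC v n = 0) :
    (∀ n : ℤ, 2 ≤ |n| → fcoefC v n = 0) ∧
    ∃ α β γ : ℂ, ∀ z : ℝ,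
      v z = α + β * Complex.exp (z * Complex.I) + γ * Complex.exp (-z * Complex.I) := by
  have hcoeff (n : ℤ) (hn : 2 ≤ |n|) : fcoefC v n = 0 := by
    have hn₀ : (n : ℂ) ≠ 0 := Int.cast_ne_zero.mpr (abs_pos.mp (by lia))
    have hmult : n * (c - m n) ≠ 0 := mul_ne_zero hn₀ (sub_ne_zero.mpr (hm n hn).symm)
    exact (mul_eq_zero.mp (heq n)).resolve_left hmult
  have hsupp : ∀ n ∉ ({0, 1, -1} : Finset ℤ), fcoefC v n = 0 := by
    intro n hn
    simp only [Finset.mem_insert, Finset.mem_singleton, not_or] at hn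
    exact hcoeff n (le_abs.mpr (by lia))
  refine ⟨hcoeff, fcoefC v 0, fcoefC v 1, fcoefC v (-1), fun z => ?_⟩
  rw [eq_sum_fcoefC_mul_exp hv hper hsupp z]
  simp [add_assoc]

/-- if `m(kn) ≠ m(k)` for all integers `|n| ≥ 2` and `v` is a
complex-valued, `2π`-periodic `H¹` function with `∂_z(−M_k + m(k)) v = 0` in the Fourier
sense, then `v̂ₙ = 0` for `|n| ≥ 2` and `v(z) = α + β e^{iz} + γ e^{−iz}`: zero is an
eigenvalue of the linearization about the zero solution with geometric multiplicity
exactly three, the eigenspace being spanned by `1`, `cos z` and `sin z`. -/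
theorem whitham_linearization_zero_eigenspace (g d T : ℝ)
    (hg : 0 < g) (hd : 0 < d) (hT : 0 ≤ T) (k : ℝ) (hk : 0 < k)
    (hm : ∀ n : ℤ, 2 ≤ |n| → mW g d T (k * (n : ℝ)) ≠ mW g d T k)
    (v : ℝ → ℂ) (hv : Continuous v) (hper : Function.Periodic v (2 * Real.pi))
    (hH1 : Summable fun n : ℤ => (1 + (n : ℝ) ^ 2) * ‖fcoefC v n‖ ^ 2)
    (heq : ∀ n : ℤ,
      (n : ℂ) * ((mW g d T k : ℂ) - (mW g d T (k * (n : ℝ)) : ℂ)) * fcoefC v n = 0) :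
    (∀ n : ℤ, 2 ≤ |n| → fcoefC v n = 0) ∧
    ∃ α β γ : ℂ, ∀ z : ℝ,
      v z = α + β * Complex.exp ((z : ℂ) * Complex.I) +
        γ * Complex.exp (-(z : ℂ) * Complex.I) :=
  whitham_linearization_zero_eigenspace_general
    (fun n hn => Complex.ofReal_injective.ne (hm n hn)) hv hper heq
end
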